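/- arXiv:2312.11428 — 2 statements merged into one kernel-verified Lean document; each statement's English description precedes it below -/
import Mathlib

section
/- Let g ∈ SL(2,ℝ) act on the hyperbolic upper half-plane ℍ² by Möbius transformations (which are isometries for the hyperbolic metric). Then for every point x ∈ ℍ², the sequence n ↦ dist(gⁿ·x, x)/n converges as n → ∞ to the translation length τ(g) := inf_{y ∈ ℍ²} dist(g·y, y). That is, on the hyperbolic plane the stable translation length coincides with the translation length. -/
open UpperHalfPlane

namespace STL

open Matrix

lemma sinh_sq (g : SpecialLinearGroup (Fin 2) ℝ) (z : UpperHalfPlane) :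
    4 * Real.sinh (dist (g • z) z / 2) ^ 2 = ((g 0 0 + g 1 1) ^ 2 - 4) +
      ((g 1 0 * z.re ^ 2 + (g 1 1 - g 0 0) * z.re - g 0 1 + g 1 0 * z.im ^ 2) / z.im) ^ 2 := by
  have hz := z.im_pos
  have hdet : g 0 0 * g 1 1 - g 0 1 * g 1 0 = 1 := by
    have := g.det_coe; rwa [Matrix.det_fin_two] at this
  have hcd : ((g 1 0 : ℝ) * (z : ℂ) + (g 1 1 : ℝ) : ℂ) ≠ 0 := by
    intro h
    have h1 := congrArg Complex.im h
    have h2 := congrArg Complex.re h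
    simp at h1 h2
    rcases h1 with h1 | h1
    · rw [h1] at h2 hdet; simp at h2; rw [h2] at hdet; simp at hdet
    · exact hz.ne' h1
  have hN : 0 < Complex.normSq ((g 1 0 : ℝ) * (z : ℂ) + (g 1 1 : ℝ) : ℂ) :=
    Complex.normSq_pos.2 hcd
  have hco : ((g • z : UpperHalfPlane) : ℂ) =
      ((g 0 0 : ℝ) * (z : ℂ) + (g 0 1 : ℝ)) / ((g 1 0 : ℝ) * (z : ℂ) + (g 1 1 : ℝ)) := by
    rw [UpperHalfPlane.coe_specialLinearGroup_apply]; simp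
  have him : (g • z).im = z.im / Complex.normSq ((g 1 0 : ℝ) * (z : ℂ) + (g 1 1 : ℝ) : ℂ) := by
    rw [← UpperHalfPlane.coe_im, hco, Complex.div_im, ← sub_div]
    congr 1
    field_simp
    simp
    linear_combination z.im * hdet
  have hsub : ((g • z : UpperHalfPlane) : ℂ) - z =
      -((g 1 0 : ℝ) * (z : ℂ) ^ 2 + ((g 1 1 : ℝ) - (g 0 0 : ℝ)) * (z : ℂ) - (g 0 1 : ℝ)) /
        ((g 1 0 : ℝ) * (z : ℂ) + (g 1 1 : ℝ)) := by
    rw [hco, eq_div_iff hcd, sub_mul, div_mul_cancel₀ _ hcd]; ring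
  rw [UpperHalfPlane.sinh_half_dist, div_pow, mul_pow, Real.sq_sqrt (by positivity),
    Complex.dist_eq, hsub, ← Complex.normSq_eq_norm_sq, Complex.normSq_div, Complex.normSq_neg, him]
  field_simp
  simp [Complex.normSq_apply, pow_two]
  linear_combination (-16 * z.im ^ 2) * hdet

lemma tau_bdd (g : SpecialLinearGroup (Fin 2) ℝ) :
    BddBelow (Set.range fun y : UpperHalfPlane => dist (g • y) y) :=
  ⟨0, by rintro _ ⟨y, rfl⟩; exact dist_nonneg⟩

lemma tau_nonneg (g : SpecialLinearGroup (Fin 2) ℝ) :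
    0 ≤ ⨅ y : UpperHalfPlane, dist (g • y) y := Real.iInf_nonneg fun _ => dist_nonneg

lemma exists_small (g : SpecialLinearGroup (Fin 2) ℝ) (ε : ℝ) (hε : 0 < ε) :
    ∃ z : UpperHalfPlane, 4 * Real.sinh (dist (g • z) z / 2) ^ 2 ≤
      max ((g 0 0 + g 1 1) ^ 2 - 4) 0 + ε := by
  have hdet : g 0 0 * g 1 1 - g 0 1 * g 1 0 = 1 := by
    have := g.det_coe; rwa [Matrix.det_fin_two] at this
  simp only [sinh_sq]
  generalize g 0 0 = a at *
  generalize g 0 1 = b at *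
  generalize g 1 0 = c at *
  generalize g 1 1 = d at *
  by_cases hc : c = 0
  · subst hc
    have hy : 0 < (|b| + 1) / √ε := by positivity
    refine ⟨⟨⟨0, (|b| + 1) / √ε⟩, hy⟩, ?_⟩
    have h1 : (-b / ((|b| + 1) / √ε)) ^ 2 ≤ ε := by
      rw [div_pow, div_pow, Real.sq_sqrt hε.le, div_div_eq_mul_div, div_le_iff₀ (by positivity)]
      nlinarith [sq_abs b, abs_nonneg b]
    have := le_max_left ((a + d) ^ 2 - 4) 0
    simp [UpperHalfPlane.re, UpperHalfPlane.im] at h1 ⊢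
    linarith
  · have key : ∀ y : ℝ, 0 < y → ∃ z : UpperHalfPlane, (a + d) ^ 2 - 4 +
        ((c * z.re ^ 2 + (d - a) * z.re - b + c * z.im ^ 2) / z.im) ^ 2 =
        (a + d) ^ 2 - 4 + (c * y - ((a + d) ^ 2 - 4) / (4 * c * y)) ^ 2 := by
      intro y hy
      refine ⟨⟨⟨(a - d) / (2 * c), y⟩, hy⟩, ?_⟩
      congr 2
      change (c * ((a - d) / (2 * c)) ^ 2 + (d - a) * ((a - d) / (2 * c)) - b + c * y ^ 2) / y = _
      field_simp
      linear_combination (16 : ℝ) * hdet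
    generalize (a + d) ^ 2 - 4 = D at *
    rcases lt_trichotomy D 0 with hD | hD | hD
    · obtain ⟨z, hz⟩ := key (√(-D) / (2 * |c|)) (by
        have : 0 < -D := by linarith
        positivity)
      refine ⟨z, ?_⟩
      rw [hz, max_eq_right hD.le]
      have hs : √(-D) ^ 2 = -D := Real.sq_sqrt (by linarith)
      have hs0 : 0 < √(-D) := Real.sqrt_pos.2 (by linarith)
      generalize √(-D) = s at *
      obtain rfl : D = -s ^ 2 := by linarith
      have : (c * (s / (2 * |c|)) - -s ^ 2 / (4 * c * (s / (2 * |c|)))) ^ 2 = s ^ 2 := by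
        rcases lt_or_gt_of_ne hc with h | h
        · rw [abs_of_neg h]; field_simp; ring
        · rw [abs_of_pos h]; field_simp; ring
      rw [this]; linarith
    · obtain ⟨z, hz⟩ := key (√ε / |c|) (by positivity)
      refine ⟨z, ?_⟩
      rw [hz, hD]
      simp [mul_pow, div_pow, Real.sq_sqrt hε.le]
      field_simp
      rfl
    · obtain ⟨z, hz⟩ := key (√D / (2 * |c|)) (by positivity)
      refine ⟨z, ?_⟩
      rw [hz, max_eq_left hD.le]
      have hs : √D ^ 2 = D := Real.sq_sqrt hD.le
      have hs0 : 0 < √D := Real.sqrt_pos.2 hD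
      generalize √D = s at *
      subst hs
      have : (c * (s / (2 * |c|)) - s ^ 2 / (4 * c * (s / (2 * |c|)))) ^ 2 = 0 := by
        rcases lt_or_gt_of_ne hc with h | h
        · rw [abs_of_neg h]; field_simp; ring
        · rw [abs_of_pos h]; field_simp; ring
      rw [this]; linarith

lemma sinh_tau (g : SpecialLinearGroup (Fin 2) ℝ) :
    4 * Real.sinh ((⨅ y : UpperHalfPlane, dist (g • y) y) / 2) ^ 2 ≤
      max ((g 0 0 + g 1 1) ^ 2 - 4) 0 := by
  refine le_of_forall_pos_le_add fun ε hε => ?_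
  obtain ⟨z, hz⟩ := exists_small g ε hε
  refine le_trans ?_ hz
  have h1 := ciInf_le (tau_bdd g) z
  have h0 := tau_nonneg g
  have : 0 ≤ Real.sinh ((⨅ y : UpperHalfPlane, dist (g • y) y) / 2) :=
    Real.sinh_nonneg_iff.2 (by linarith)
  gcongr
  exact Real.sinh_le_sinh.2 (by linarith)

lemma tau_sq (g : SpecialLinearGroup (Fin 2) ℝ) (x : UpperHalfPlane) :
    2 * (⨅ y : UpperHalfPlane, dist (g • y) y) ≤ dist (g ^ 2 • x) x := by
  have hdet : g 0 0 * g 1 1 - g 0 1 * g 1 0 = 1 := by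
    have := g.det_coe; rwa [Matrix.det_fin_two] at this
  have h1 := sinh_tau g
  have h0 := tau_nonneg g
  have h2 := sinh_sq (g ^ 2) x
  generalize (⨅ y : UpperHalfPlane, dist (g • y) y) = t at *
  rcases le_total ((g 0 0 + g 1 1) ^ 2 - 4) 0 with h | h
  · rw [max_eq_right h] at h1
    have h3 : Real.sinh (t / 2) = 0 := by
      have := sq_nonneg (Real.sinh (t / 2))
      exact pow_eq_zero_iff (two_ne_zero) |>.1 (by linarith)
    have h4 : t / 2 = 0 := Real.sinh_eq_zero.1 h3
    have : 0 ≤ dist (g ^ 2 • x) x := dist_nonneg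
    linarith
  · rw [max_eq_left h] at h1
    have htr : (g ^ 2) 0 0 + (g ^ 2) 1 1 = (g 0 0 + g 1 1) ^ 2 - 2 := by
      have hm : ∀ i j, (g ^ 2) i j = ((g : Matrix (Fin 2) (Fin 2) ℝ) * g) i j := by
        intro i j; rw [pow_two]; rfl
      rw [hm, hm]
      simp [Matrix.mul_apply, Fin.sum_univ_two]
      linear_combination (-2 : ℝ) * hdet
    rw [htr] at h2
    have h3 : 4 * (Real.cosh t ^ 2 - 1) ≤ 4 * Real.sinh (dist (g ^ 2 • x) x / 2) ^ 2 := by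
      have hc : Real.cosh t = 1 + 2 * Real.sinh (t / 2) ^ 2 := by
        have := Real.cosh_two_mul (t / 2)
        rw [mul_div_cancel₀ _ two_ne_zero, Real.cosh_sq] at this
        linarith
      have : 2 * Real.cosh t ≤ (g 0 0 + g 1 1) ^ 2 - 2 := by linarith
      have h1t := Real.one_le_cosh t
      rw [h2]
      refine le_trans ?_ (le_add_of_nonneg_right (sq_nonneg _))
      nlinarith
    rw [Real.cosh_sq] at h3
    have hd : 0 ≤ dist (g ^ 2 • x) x := dist_nonneg
    have h4 : Real.sinh t ≤ Real.sinh (dist (g ^ 2 • x) x / 2) :=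
      le_of_sq_le_sq (by linarith) (Real.sinh_nonneg_iff.2 (by linarith))
    have := Real.sinh_le_sinh.1 h4
    linarith

lemma tau_pow (k : ℕ) : ∀ (g : SpecialLinearGroup (Fin 2) ℝ) (x : UpperHalfPlane),
    2 ^ k * (⨅ y : UpperHalfPlane, dist (g • y) y) ≤ dist (g ^ (2 ^ k) • x) x := by
  induction k with
  | zero => intro g x; simpa using ciInf_le (tau_bdd g) x
  | succ k ih =>
    intro g x
    have h1 := ih (g ^ 2) x
    have h2 : 2 * (⨅ y : UpperHalfPlane, dist (g • y) y) ≤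
      ⨅ y : UpperHalfPlane, dist (g ^ 2 • y) y := le_ciInf fun y => tau_sq g y
    rw [← pow_mul, ← pow_succ'] at h1
    refine le_trans ?_ h1
    rw [pow_succ, mul_assoc]
    gcongr

lemma dist_pow_le (g : SpecialLinearGroup (Fin 2) ℝ) (y : UpperHalfPlane) (n : ℕ) :
    dist (g ^ n • y) y ≤ n * dist (g • y) y := by
  induction n with
  | zero => simp
  | succ n ih =>
    have h : dist (g ^ (n + 1) • y) (g ^ n • y) = dist (g • y) y := by
      rw [pow_succ, mul_smul, dist_smul]
    have := dist_triangle (g ^ (n + 1) • y) (g ^ n • y) y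
    push_cast
    linarith

end STL

/-- For `g ∈ SL(2,ℝ)` acting on the hyperbolic upper half-plane by Möbius transformations,
the stable translation length at any point `x` exists and equals the translation length
`τ(g) = ⨅ y, dist (g • y) y`. -/
theorem stable_translation_length_eq_translation_length
    (g : Matrix.SpecialLinearGroup (Fin 2) ℝ) (x : UpperHalfPlane) :
    Filter.Tendsto (fun n : ℕ => dist (g ^ n • x) x / (n : ℝ)) Filter.atTop
      (nhds (⨅ y : UpperHalfPlane, dist (g • y) y)) := by
  have hsub : Subadditive fun n : ℕ => dist (g ^ n • x) x := by
    intro m n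
    have h : dist (g ^ (m + n) • x) (g ^ m • x) = dist (g ^ n • x) x := by
      rw [pow_add, mul_smul, dist_smul]
    have := dist_triangle (g ^ (m + n) • x) (g ^ m • x) x
    dsimp only
    linarith
  have hlim := hsub.tendsto_lim ⟨0, by rintro _ ⟨n, rfl⟩; positivity⟩
  have hEq : hsub.lim = ⨅ y : UpperHalfPlane, dist (g • y) y := by
    apply le_antisymm
    · refine le_ciInf fun y => ?_
      have hT : Filter.Tendsto (fun n : ℕ => 2 * dist x y / (n : ℝ) + dist (g • y) y)
          Filter.atTop (nhds (0 + dist (g • y) y)) :=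
        (tendsto_const_div_atTop_nhds_zero_nat _).add_const _
      rw [zero_add] at hT
      refine le_of_tendsto_of_tendsto hlim hT ?_
      filter_upwards [Filter.eventually_gt_atTop 0] with n hn
      have hn' : (0 : ℝ) < n := by exact_mod_cast hn
      rw [div_add' _ _ _ hn'.ne']
      gcongr
      have h1 := dist_triangle4 (g ^ n • x) (g ^ n • y) y x
      rw [dist_smul, dist_comm y x] at h1
      have h2 := STL.dist_pow_le g y n
      linarith
    · have h2 := hlim.comp (tendsto_pow_atTop_atTop_of_one_lt (one_lt_two : (1 : ℕ) < 2))
      refine ge_of_tendsto' h2 fun k => ?_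
      have := STL.tau_pow k g x
      simp only [Function.comp]
      rw [le_div_iff₀ (by positivity)]
      push_cast
      linarith
  rw [← hEq]
  exact hlim
end

section
/- Let Γ be a discrete, torsion-free subgroup of SL(2,ℝ) whose action on the hyperbolic upper half-plane ℍ² by Möbius transformations is cocompact, i.e., there is a compact set K ⊆ ℍ² whose Γ-translates cover ℍ². Let S be a finite generating set of Γ. Then there exists a constant K_{X,S} > 0 such that for all γ ∈ Γ: (1/K_{X,S})·τ_S(γ) − K_{X,S} ≤ τ(γ) ≤ K_{X,S}·τ_S(γ), where τ(γ) := inf_{x ∈ ℍ²} dist(γ·x, x) is the translation length of γ on ℍ² and τ_S(γ) is the translation length of γ on the Cayley graph of (Γ,S), namely the minimum, over all conjugates γ' of γ in Γ, of the word length of γ' with respect to S ∪ S⁻¹ (the least n such that γ' is a product of n elements of S ∪ S⁻¹). -/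
open UpperHalfPlane

/-- `SL(2,ℝ)` with its natural topology, induced from the space of `2 × 2` real matrices. -/
instance : TopologicalSpace (Matrix.SpecialLinearGroup (Fin 2) ℝ) :=
  TopologicalSpace.induced (fun g : Matrix.SpecialLinearGroup (Fin 2) ℝ => (g : Matrix (Fin 2) (Fin 2) ℝ))
    inferInstance

/-- The word length of `γ` with respect to `S ∪ S⁻¹`: the least `n` such that `γ` is a
product of `n` elements of `S ∪ S⁻¹` (the identity having word length `0`). -/
noncomputable def wordLength (S : Finset (Matrix.SpecialLinearGroup (Fin 2) ℝ))
    (γ : Matrix.SpecialLinearGroup (Fin 2) ℝ) : ℕ :=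
  sInf {n : ℕ | ∃ l : List (Matrix.SpecialLinearGroup (Fin 2) ℝ),
    l.length = n ∧ (∀ a ∈ l, a ∈ S ∨ a⁻¹ ∈ S) ∧ l.prod = γ}

/-- The translation length of `γ` on the Cayley graph of `(Γ, S)`: the minimum, over all
conjugates of `γ` in `Γ`, of the word length with respect to `S ∪ S⁻¹`. -/
noncomputable def cayleyTranslationLength (S : Finset (Matrix.SpecialLinearGroup (Fin 2) ℝ))
    (Γ : Subgroup (Matrix.SpecialLinearGroup (Fin 2) ℝ))
    (γ : Matrix.SpecialLinearGroup (Fin 2) ℝ) : ℕ :=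
  sInf {n : ℕ | ∃ δ ∈ Γ, wordLength S (δ * γ * δ⁻¹) = n}

/-- Abbreviation for `SL(2,ℝ)`. -/
abbrev SLtwo := Matrix.SpecialLinearGroup (Fin 2) ℝ

theorem exists_smul_re_eq (z w : UpperHalfPlane) :
    ∃ g : SLtwo, (g • z).re = (g • w).re := by
  by_cases h : z.re = w.re
  · exact ⟨1, by simpa using h⟩
  -- the semicircle through z, w has centre c and radius r; set e = c - r
  set c : ℝ := (z.re ^ 2 + z.im ^ 2 - w.re ^ 2 - w.im ^ 2) / (2 * (z.re - w.re)) with hc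
  set r : ℝ := Real.sqrt ((z.re - c) ^ 2 + z.im ^ 2) with hr
  have hrpos : 0 < r := Real.sqrt_pos.2 (by have := z.im_pos; positivity)
  have hr2 : r ^ 2 = (z.re - c) ^ 2 + z.im ^ 2 :=
    Real.sq_sqrt (by positivity)
  have hne : z.re - w.re ≠ 0 := sub_ne_zero.2 h
  have hc' : c * (2 * (z.re - w.re)) = z.re ^ 2 + z.im ^ 2 - w.re ^ 2 - w.im ^ 2 := by
    rw [hc]; field_simp
  have hr2' : r ^ 2 = (w.re - c) ^ 2 + w.im ^ 2 := by rw [hr2]; linarith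
  let g : SLtwo := ⟨!![0, -1; 1, -(c - r)], by simp [Matrix.det_fin_two]⟩
  have key : ∀ u : UpperHalfPlane, r ^ 2 = (u.re - c) ^ 2 + u.im ^ 2 →
      (g • u).re = - 1 / (2 * r) := by
    intro u hu
    have hpos := u.im_pos
    have h1 : (g • u).re = (((g • u : UpperHalfPlane)) : ℂ).re := rfl
    rw [h1, UpperHalfPlane.coe_specialLinearGroup_apply]
    have hD : (u.re - (c - r)) ^ 2 + u.im ^ 2 = 2 * r * (u.re - (c - r)) := by linarith
    have hD0 : 0 < (u.re - (c - r)) ^ 2 + u.im ^ 2 := by positivity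
    have hD1 : 0 < u.re - (c - r) := by
      rw [hD] at hD0
      exact pos_of_mul_pos_right hD0 (by positivity)
    have e : Complex.normSq ((u : ℂ) + -((c : ℂ) - r)) = 2 * r * (u.re - (c - r)) := by
      rw [← hD, Complex.normSq_apply]
      simp
      ring
    simp [g, Complex.div_re] at e ⊢
    rw [e]
    field_simp
    ring
  exact ⟨g, by rw [key z hr2, key w hr2']⟩

theorem exists_chain (z w : UpperHalfPlane) :
    ∃ (n : ℕ) (p : ℕ → UpperHalfPlane), (n : ℝ) ≤ dist z w + 2 ∧ p 0 = z ∧ p n = w ∧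
      ∀ k, dist (p k) (p (k + 1)) ≤ 1 := by
  obtain ⟨g, hg⟩ := exists_smul_re_eq z w
  set a := Real.log (g • z).im with ha
  set b := Real.log (g • w).im with hb
  have hd : dist z w = |b - a| := by
    rw [← dist_smul g z w, UpperHalfPlane.dist_of_re_eq hg, Real.dist_eq, abs_sub_comm]
  set n : ℕ := ⌈dist z w⌉₊ + 1 with hn
  have hn0 : (0 : ℝ) < n := by positivity
  have hdn : dist z w ≤ n := by
    rw [hn]; push_cast
    linarith [Nat.le_ceil (dist z w)]
  let v : ℝ → UpperHalfPlane := fun y => UpperHalfPlane.mk ⟨(g • z).re, Real.exp y⟩ (Real.exp_pos y)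
  have hv : Isometry v := UpperHalfPlane.isometry_vertical_line _
  refine ⟨n, fun k => g⁻¹ • v (a + k * ((b - a) / n)), ?_, ?_, ?_, ?_⟩
  · rw [hn]; push_cast
    linarith [Nat.ceil_lt_add_one (dist_nonneg : 0 ≤ dist z w)]
  · rw [inv_smul_eq_iff]
    apply UpperHalfPlane.ext
    apply Complex.ext
    · simp [v]
    · simp [v, ha, Real.exp_log (UpperHalfPlane.im_pos _)]
  · rw [inv_smul_eq_iff]
    have : a + n * ((b - a) / n) = b := by field_simp; ring
    rw [this]
    apply UpperHalfPlane.ext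
    apply Complex.ext
    · simpa [v] using hg
    · simp [v, hb, Real.exp_log (UpperHalfPlane.im_pos _)]
  · intro k
    rw [dist_smul, hv.dist_eq, Real.dist_eq]
    have : a + k * ((b - a) / n) - (a + ((k + 1 : ℕ) : ℝ) * ((b - a) / n)) = -((b - a) / n) := by
      push_cast; ring
    rw [this, abs_neg, abs_div, ← hd, abs_of_pos hn0]
    exact (div_le_one hn0).2 hdn

theorem exists_word {S : Finset SLtwo} {Γ : Subgroup SLtwo}
    (hgen : Subgroup.closure (↑S : Set SLtwo) = Γ) {γ : SLtwo} (hγ : γ ∈ Γ) :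
    ∃ l : List SLtwo, l.length = wordLength S γ ∧ (∀ a ∈ l, a ∈ S ∨ a⁻¹ ∈ S) ∧ l.prod = γ := by
  rw [← hgen] at hγ
  rw [← Subgroup.mem_toSubmonoid, Subgroup.closure_toSubmonoid] at hγ
  obtain ⟨l, hl, hp⟩ := Submonoid.exists_list_of_mem_closure hγ
  exact Nat.sInf_mem (s := {n : ℕ | ∃ l : List SLtwo,
    l.length = n ∧ (∀ a ∈ l, a ∈ S ∨ a⁻¹ ∈ S) ∧ l.prod = γ}) ⟨l.length, l, rfl, hl, hp⟩

theorem wordLength_mul_le {S : Finset SLtwo} {Γ : Subgroup SLtwo}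
    (hgen : Subgroup.closure (↑S : Set SLtwo) = Γ) {γ δ : SLtwo} (hγ : γ ∈ Γ) (hδ : δ ∈ Γ) :
    wordLength S (γ * δ) ≤ wordLength S γ + wordLength S δ := by
  obtain ⟨l, h1, h2, h3⟩ := exists_word hgen hγ
  obtain ⟨m, k1, k2, k3⟩ := exists_word hgen hδ
  refine Nat.sInf_le ⟨l ++ m, by simp [h1, k1], ?_, by simp [h3, k3]⟩
  intro a ha
  rcases List.mem_append.1 ha with h | h
  · exact h2 a h
  · exact k2 a h

theorem wordLength_one_eq (S : Finset SLtwo) : wordLength S 1 = 0 :=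
  Nat.le_zero.1 (Nat.sInf_le ⟨[], rfl, by simp, rfl⟩)

theorem dist_prod_le (S : Finset SLtwo) (x : UpperHalfPlane) (M : ℝ)
    (hM : ∀ s ∈ S, dist (s • x) x ≤ M) (l : List SLtwo) (hl : ∀ a ∈ l, a ∈ S ∨ a⁻¹ ∈ S) :
    dist (l.prod • x) x ≤ M * l.length := by
  induction l with
  | nil => simp
  | cons a l ih =>
    have h1 := ih (fun b hb => hl b (List.mem_cons_of_mem _ hb))
    have h2 : dist (a • x) x ≤ M := by
      rcases hl a List.mem_cons_self with h | h
      · exact hM a h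
      · have := hM _ h
        rwa [← dist_smul a, smul_inv_smul, dist_comm] at this
    have h3 := dist_triangle ((a * l.prod) • x) (a • x) x
    rw [mul_smul, dist_smul] at h3
    rw [List.prod_cons, List.length_cons, mul_smul]
    push_cast
    linarith

theorem finite_close (Γ : Subgroup SLtwo) (hdisc : DiscreteTopology Γ)
    (K : Set UpperHalfPlane) (hK : IsCompact K) :
    {h : SLtwo | h ∈ Γ ∧ ∃ k ∈ K, ∃ k' ∈ K, dist k (h • k') ≤ 1}.Finite := by
  have hpd : ProperlyDiscontinuousSMul Γ UpperHalfPlane :=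
    @UpperHalfPlane.instProperlyDiscontinuousSL2RSubgroup Γ hdisc
  have hL : IsCompact (Metric.cthickening 1 K) := hK.cthickening
  have hf := hpd.finite_disjoint_inter_image hK hL
  refine (hf.image (fun g : Γ => (g : SLtwo))).subset ?_
  rintro h ⟨hh, k, hk, k', hk', hd⟩
  refine ⟨⟨h, hh⟩, ?_, rfl⟩
  have hne : (Set.image (fun x : UpperHalfPlane => (⟨h, hh⟩ : Γ) • x) K ∩
      Metric.cthickening 1 K).Nonempty := by
    refine ⟨h • k', ⟨k', hk', rfl⟩, ?_⟩
    exact Metric.mem_cthickening_of_dist_le _ k 1 K hk (by rwa [dist_comm])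
  exact hne

theorem wordLength_le_dist (Γ : Subgroup SLtwo) (hdisc : DiscreteTopology Γ)
    (K : Set UpperHalfPlane) (hK : IsCompact K)
    (hcover : ∀ x : UpperHalfPlane, ∃ γ ∈ Γ, ∃ y ∈ K, γ • y = x)
    (S : Finset SLtwo) (hgen : Subgroup.closure (↑S : Set SLtwo) = Γ) :
    ∃ L : ℕ, ∀ g ∈ Γ, ∀ y ∈ K, (wordLength S g : ℝ) ≤ L * (dist (g • y) y + 4) := by
  have hF := finite_close Γ hdisc K hK
  obtain ⟨L, hL⟩ := (hF.image (wordLength S)).bddAbove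
  have hL' : ∀ h ∈ Γ, ∀ k ∈ K, ∀ k' ∈ K, dist k (h • k') ≤ 1 → wordLength S h ≤ L :=
    fun h hh k hk k' hk' hd => hL ⟨h, ⟨hh, k, hk, k', hk', hd⟩, rfl⟩
  refine ⟨L, fun g hg y hy => ?_⟩
  obtain ⟨n, p, hn, hp0, hpn, hstep⟩ := exists_chain y (g • y)
  choose q hq k hk hqk using fun i => hcover (p i)
  have step : ∀ a ∈ Γ, ∀ b ∈ Γ, ∀ u ∈ K, ∀ v ∈ K, dist (a • u) (b • v) ≤ 1 →
      wordLength S b ≤ wordLength S a + L := by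
    intro a ha b hb u hu v hv hd
    have hab : a⁻¹ * b ∈ Γ := Γ.mul_mem (Γ.inv_mem ha) hb
    have h1 : wordLength S (a⁻¹ * b) ≤ L := by
      refine hL' _ hab u hu v hv ?_
      rwa [mul_smul, ← dist_smul a, smul_inv_smul]
    have h2 := wordLength_mul_le hgen ha hab
    rw [mul_inv_cancel_left] at h2
    omega
  have hind : ∀ i, wordLength S (q i) ≤ L * (i + 1) := by
    intro i
    induction i with
    | zero =>
      have := step 1 Γ.one_mem (q 0) (hq 0) y hy (k 0) (hk 0) (by rw [hqk, hp0]; simp)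
      rw [wordLength_one_eq] at this
      simpa using this
    | succ i ih =>
      have := step (q i) (hq i) (q (i + 1)) (hq _) (k i) (hk i) (k (i + 1)) (hk _)
        (by rw [hqk, hqk]; exact hstep i)
      calc _ ≤ _ := this
        _ ≤ L * (i + 1) + L := by omega
        _ = _ := by ring
  have hfin : wordLength S g ≤ L * (n + 2) := by
    have := step (q n) (hq n) g hg (k n) (hk n) y hy (by rw [hqk, hpn]; simp)
    calc _ ≤ _ := this
      _ ≤ L * (n + 1) + L := by have := hind n; omega
      _ = _ := by ring
  calc (wordLength S g : ℝ) ≤ ((L * (n + 2) : ℕ) : ℝ) := by exact_mod_cast hfin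
    _ = L * ((n : ℝ) + 2) := by push_cast; ring
    _ ≤ _ := by
      apply mul_le_mul_of_nonneg_left _ (Nat.cast_nonneg _)
      rw [dist_comm]; linarith

/-- For a discrete, torsion-free, cocompact subgroup `Γ` of `SL(2,ℝ)` with finite generating
set `S`, the translation length on the hyperbolic plane and the translation length on the
Cayley graph agree up to uniform multiplicative and additive constants. -/
theorem translation_length_comparison_cocompact
    (Γ : Subgroup (Matrix.SpecialLinearGroup (Fin 2) ℝ))
    (hdisc : DiscreteTopology Γ)
    (htf : ∀ γ : Matrix.SpecialLinearGroup (Fin 2) ℝ,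
      γ ∈ Γ → γ ≠ 1 → ∀ n : ℕ, 0 < n → γ ^ n ≠ 1)
    (K : Set UpperHalfPlane) (hK : IsCompact K)
    (hcover : ∀ x : UpperHalfPlane, ∃ γ ∈ Γ, ∃ y ∈ K, γ • y = x)
    (S : Finset (Matrix.SpecialLinearGroup (Fin 2) ℝ))
    (hSΓ : ↑S ⊆ (Γ : Set (Matrix.SpecialLinearGroup (Fin 2) ℝ)))
    (hgen : Subgroup.closure (↑S : Set (Matrix.SpecialLinearGroup (Fin 2) ℝ)) = Γ) :
    ∃ C : ℝ, 0 < C ∧ ∀ γ ∈ Γ,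
      (1 / C) * (cayleyTranslationLength S Γ γ : ℝ) - C
          ≤ (⨅ x : UpperHalfPlane, dist (γ • x) x) ∧
      (⨅ x : UpperHalfPlane, dist (γ • x) x)
          ≤ C * (cayleyTranslationLength S Γ γ : ℝ) := by
  obtain ⟨L, hL⟩ := wordLength_le_dist Γ hdisc K hK hcover S hgen
  obtain ⟨M, hM⟩ := (S.finite_toSet.image (fun s => dist (s • UpperHalfPlane.I)
    UpperHalfPlane.I)).bddAbove
  have hbdd : ∀ γ : Matrix.SpecialLinearGroup (Fin 2) ℝ,
      BddBelow (Set.range fun x : UpperHalfPlane => dist (γ • x) x) :=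
    fun γ => ⟨0, by rintro _ ⟨x, rfl⟩; exact dist_nonneg⟩
  have hC : (0 : ℝ) < L + |M| + 4 := by positivity
  refine ⟨L + |M| + 4, hC, fun γ hγ => ⟨?_, ?_⟩⟩
  · refine le_ciInf fun x => ?_
    obtain ⟨δ, hδ, y, hy, rfl⟩ := hcover x
    have hg : δ⁻¹ * γ * δ⁻¹⁻¹ ∈ Γ :=
      Γ.mul_mem (Γ.mul_mem (Γ.inv_mem hδ) hγ) (Γ.inv_mem (Γ.inv_mem hδ))
    have h1 : cayleyTranslationLength S Γ γ ≤ wordLength S (δ⁻¹ * γ * δ⁻¹⁻¹) :=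
      Nat.sInf_le ⟨δ⁻¹, Γ.inv_mem hδ, rfl⟩
    have h2 := hL _ hg y hy
    have h3 : dist ((δ⁻¹ * γ * δ⁻¹⁻¹) • y) y = dist (γ • δ • y) (δ • y) := by
      rw [← dist_smul δ, mul_smul, mul_smul, smul_inv_smul, inv_inv]
    rw [h3] at h2
    have h4 : (cayleyTranslationLength S Γ γ : ℝ) ≤ L * (dist (γ • δ • y) (δ • y) + 4) :=
      le_trans (by exact_mod_cast h1) h2
    have hd : 0 ≤ dist (γ • δ • y) (δ • y) := dist_nonneg
    have h5 : 1 / ((L : ℝ) + |M| + 4) * (cayleyTranslationLength S Γ γ : ℝ) ≤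
        dist (γ • δ • y) (δ • y) + 4 := by
      rw [one_div, inv_mul_le_iff₀ hC]
      refine h4.trans (mul_le_mul_of_nonneg_right ?_ (by linarith))
      linarith [abs_nonneg M]
    have : (0 : ℝ) ≤ L := Nat.cast_nonneg _
    linarith [abs_nonneg M]
  · obtain ⟨δ, hδ, hw⟩ := Nat.sInf_mem
      (s := {n : ℕ | ∃ δ ∈ Γ, wordLength S (δ * γ * δ⁻¹) = n}) ⟨_, 1, Γ.one_mem, rfl⟩
    change _ = cayleyTranslationLength S Γ γ at hw
    obtain ⟨l, h1, h2, h3⟩ := exists_word hgen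
      (Γ.mul_mem (Γ.mul_mem hδ hγ) (Γ.inv_mem hδ))
    have h4 := dist_prod_le S UpperHalfPlane.I M (fun s hs => hM ⟨s, hs, rfl⟩) l h2
    rw [h3, h1, hw] at h4
    refine (ciInf_le (hbdd γ) (δ⁻¹ • UpperHalfPlane.I)).trans ?_
    have h5 : dist (γ • δ⁻¹ • UpperHalfPlane.I) (δ⁻¹ • UpperHalfPlane.I) =
        dist ((δ * γ * δ⁻¹) • UpperHalfPlane.I) UpperHalfPlane.I := by
      rw [← dist_smul δ, smul_inv_smul, mul_smul, mul_smul]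
    rw [h5]
    refine h4.trans (mul_le_mul_of_nonneg_right ?_ (Nat.cast_nonneg _))
    have : (0 : ℝ) ≤ L := Nat.cast_nonneg _
    linarith [le_abs_self M]
end
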